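/- arXiv:2209.12246 — 3 statements merged into one kernel-verified Lean document; each statement's English description precedes it below -/
import Mathlib

section
/- Let Ω be a class of unital C*-algebras and let A be a simple unital C*-algebra such that A and all algebras in Ω are unital. If A belongs to the class WTAΩ, then A belongs to the class GTAΩ. -/
open Filter Topology

/-- An element of a C*-algebra is positive if it is of the form `x* x`. -/
def IsPos {A : Type*} [Mul A] [Star A] (a : A) : Prop := ∃ x : A, a = star x * x

/-- Cuntz subequivalence `a ≾_A b`. -/
def CuntzBelow {A : Type*} [NonUnitalNormedRing A] [Star A] (a b : A) : Prop :=
  ∃ v : ℕ → A, Tendsto (fun n => ‖v n * b * star (v n) - a‖) atTop (nhds 0)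

/-- `x ∈_ε S`: `x` lies within `ε` of the set `S`. -/
def ApproxIn {A : Type*} [NormedAddGroup A] (x : A) (S : Set A) (ε : ℝ) : Prop :=
  ∃ y ∈ S, ‖x - y‖ < ε

/-- `(a - ε)₊`, via continuous functional calculus. -/
noncomputable def CutPos {A : Type*} [CStarAlgebra A] (a : A) (ε : ℝ) : A :=
  cfc (fun t : ℝ => max (t - ε) 0) a

/-- A C*-algebra is simple if it is nontrivial and has no proper nontrivial
closed two-sided ideals. -/
def IsSimpleCStarAlgebra (A : Type*) [NonUnitalNormedRing A] : Prop :=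
  Nontrivial A ∧ ∀ I : TwoSidedIdeal A, IsClosed (I : Set A) →
    (I : Set A) = {0} ∨ (I : Set A) = Set.univ

variable {A : Type*} [CStarAlgebra A]

/-- Membership in the class `WTAΩ` (Elliott–Fan–Fang weak tracial approximation),
where the class `Ω` is modelled as a set of (C*-)subalgebras of `A`. -/
def MemWTA (Ω : Set (NonUnitalStarSubalgebra ℂ A)) : Prop :=
  ∀ ε : ℝ, 0 < ε → ∀ F : Finset A, ∀ a : A, IsPos a → a ≠ 0 →
    ∃ B ∈ Ω, IsClosed (B : Set A) ∧
      ∃ p ∈ B, IsSelfAdjoint p ∧ p * p = p ∧ (∀ b ∈ B, p * b = b ∧ b * p = b) ∧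
        ∃ g ∈ B, IsPos g ∧ IsPos (1 - g) ∧
          (∀ x ∈ F, ApproxIn ((p - g) * x) (B : Set A) ε ∧
            ApproxIn (x * (p - g)) (B : Set A) ε) ∧
          (∀ x ∈ F, ‖(p - g) * x - x * (p - g)‖ < ε) ∧
          CuntzBelow (1 - (p - g)) a ∧
          ‖a‖ - ε ≤ ‖(p - g) * a * (p - g)‖

/-- Membership in the class `GTAΩ` (generalized/weak tracial approximation),
where the class `Ω` is modelled as a set of (C*-)subalgebras of `A`. -/
def MemGTA (Ω : Set (NonUnitalStarSubalgebra ℂ A)) : Prop :=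
  ∀ ε : ℝ, 0 < ε → ∀ F : Finset A, ∀ a b : A, IsPos a → ‖a‖ = 1 → IsPos b → ‖b‖ ≤ 1 →
    ∃ B ∈ Ω, IsClosed (B : Set A) ∧
      ∃ r ∈ B, IsPos r ∧ ‖r‖ ≤ 1 ∧
        (∀ x ∈ F, ApproxIn (r * x) (B : Set A) ε ∧ ApproxIn (x * r) (B : Set A) ε) ∧
        (∀ x ∈ F, ‖r * x - x * r‖ < ε) ∧
        CuntzBelow (CutPos (b * b - b * r * b) ε) a ∧
        1 - ε ≤ ‖r * a * r‖

theorem IsPos.isSelfAdjoint {a : A} (ha : IsPos a) : IsSelfAdjoint a := by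
  obtain ⟨x, rfl⟩ := ha
  exact .star_mul_self x

theorem IsPos.norm_one_sub_le {g : A} (hg : IsPos g) (hg' : IsPos (1 - g)) : ‖1 - g‖ ≤ 1 := by
  let _ := CStarAlgebra.spectralOrder A
  have := CStarAlgebra.spectralOrderedRing A
  have h0 : 0 ≤ g := by
    obtain ⟨x, rfl⟩ := hg
    exact star_mul_self_nonneg x
  have h1 : 0 ≤ 1 - g := by
    obtain ⟨x, hx⟩ := hg'
    exact hx ▸ star_mul_self_nonneg x
  exact (CStarAlgebra.norm_le_one_iff_of_nonneg _ h1).2 (sub_le_self _ h0)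

/-- Cuntz subequivalence is preserved by conjugating the left-hand side. -/
theorem CuntzBelow.conj {c a : A} (h : CuntzBelow c a) (w : A) :
    CuntzBelow (w * c * star w) a := by
  obtain ⟨v, hv⟩ := h
  refine ⟨fun n => w * v n, ?_⟩
  have hlim := (hv.const_mul ‖w‖).mul_const ‖star w‖
  rw [mul_zero, zero_mul] at hlim
  refine squeeze_zero (fun _ => norm_nonneg _) (fun n => ?_) hlim
  have : w * v n * a * star (w * v n) - w * c * star w =
      w * (v n * a * star (v n) - c) * star w := by
    rw [star_mul]
    noncomm_ring
  rw [this]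
  exact norm_mul₃_le

/-- `(c - ε)₊` is a conjugate of `c`. -/
theorem exists_cutPos_eq_conj {c : A} (hc : IsSelfAdjoint c) {ε : ℝ} (hε : 0 < ε) :
    ∃ w : A, CutPos c ε = w * c * star w := by
  let f : ℝ → ℝ := fun t => √(max (t - ε) 0 / max t ε)
  have hpos (t : ℝ) : 0 < max t ε := lt_max_of_lt_right hε
  have hf : Continuous f := by
    have hdiv : Continuous fun t : ℝ => max (t - ε) 0 / max t ε :=
      .div (by fun_prop) (by fun_prop) fun t => (hpos t).ne'
    exact Real.continuous_sqrt.comp hdiv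
  refine ⟨cfc f c, ?_⟩
  rw [(cfc_predicate f c : IsSelfAdjoint (cfc f c)).star_eq]
  have hmul : cfc f c * c * cfc f c = cfc (fun t => f t * t * f t) c := by
    conv_lhs => enter [1, 2]; rw [← cfc_id' ℝ c]
    rw [← cfc_mul f (fun t => t) c hf.continuousOn,
      ← cfc_mul (fun t => f t * t) f c (by fun_prop) hf.continuousOn]
  rw [hmul, CutPos]
  congr 1
  funext t
  have hsq : f t * f t = max (t - ε) 0 / max t ε :=
    Real.mul_self_sqrt (div_nonneg (le_max_right _ _) (hpos t).le)
  rw [mul_right_comm, hsq]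
  rcases le_total t ε with ht | ht
  · simp [max_eq_right (sub_nonpos.2 ht)]
  · rw [max_eq_left ht, div_mul_cancel₀ _ (hε.trans_le ht).ne']

/-- If `A` is a simple unital C*-algebra, `Ω` is a class of unital
C*-algebras, and `A ∈ WTAΩ`, then `A ∈ GTAΩ`. -/
theorem memGTA_of_memWTA
    (hA : IsSimpleCStarAlgebra A)
    (Ω : Set (NonUnitalStarSubalgebra ℂ A))
    (hΩ : ∀ B ∈ Ω, ∃ e ∈ B, ∀ b ∈ B, e * b = b ∧ b * e = b)
    (h : MemWTA Ω) : MemGTA Ω := by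
  intro ε hε F a b ha ha1 hb _
  have ha0 : a ≠ 0 := by
    rintro rfl
    simp at ha1
  obtain ⟨B, hB, hBc, p, hpB, hps, hpp, hp1, g, hgB, hg, hg', hF, hFc, hcz, hn⟩ :=
    h ε hε F a ha ha0
  have hr : p - g = p * (1 - g) * p := by
    rw [mul_sub, sub_mul, mul_one, hpp, (hp1 g hgB).1, (hp1 g hgB).2]
  have hpn : ‖p‖ ≤ 1 := IsStarProjection.norm_le p ⟨hpp, hps⟩
  have hrpos : IsPos (p - g) := by
    obtain ⟨x, hx⟩ := hg'
    exact ⟨x * p, by rw [hr, hx, star_mul, hps.star_eq]; noncomm_ring⟩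
  refine ⟨B, hB, hBc, p - g, sub_mem hpB hgB, hrpos, ?_, hF, hFc, ?_, ha1 ▸ hn⟩
  · rw [hr]
    calc ‖p * (1 - g) * p‖ ≤ ‖p‖ * ‖1 - g‖ * ‖p‖ := norm_mul₃_le
      _ ≤ 1 * 1 * 1 := by
        gcongr
        exact hg.norm_one_sub_le hg'
      _ = 1 := by norm_num
  · have hc : b * b - b * (p - g) * b = b * (1 - (p - g)) * star b := by
      rw [hb.isSelfAdjoint.star_eq]
      noncomm_ring
    have hsa : IsSelfAdjoint (b * b - b * (p - g) * b) :=
      hc ▸ ((IsSelfAdjoint.one A).sub hrpos.isSelfAdjoint).conjugate b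
    obtain ⟨w, hw⟩ := exists_cutPos_eq_conj hsa hε
    rw [hw, hc]
    exact (hcz.conj b).conj w
end

section
/- Let Ω be a class of unital C*-algebras and let A be a simple unital C*-algebra such that A and all algebras in Ω are unital. If A belongs to the class GTAΩ, then A belongs to the class WTAΩ. -/
open Filter Topology

variable {A : Type*} [CStarAlgebra A]

theorem IsPos.add {a b : A} (ha : IsPos a) (hb : IsPos b) : IsPos (a + b) := by
  let _ := CStarAlgebra.spectralOrder A
  have := CStarAlgebra.spectralOrderedRing A
  exact CStarAlgebra.nonneg_iff_eq_star_mul_self.mp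
    (add_nonneg (CStarAlgebra.nonneg_iff_eq_star_mul_self.mpr ha)
      (CStarAlgebra.nonneg_iff_eq_star_mul_self.mpr hb))

theorem IsPos.spectrum_nonneg {a : A} (ha : IsPos a) {t : ℝ} (ht : t ∈ spectrum ℝ a) : 0 ≤ t := by
  let _ := CStarAlgebra.spectralOrder A
  have := CStarAlgebra.spectralOrderedRing A
  exact spectrum_nonneg_of_nonneg (CStarAlgebra.nonneg_iff_eq_star_mul_self.mpr ha) ht

theorem isPos_cfc {f : ℝ → ℝ} {a : A} (h : ∀ t ∈ spectrum ℝ a, 0 ≤ f t) : IsPos (cfc f a) := by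
  let _ := CStarAlgebra.spectralOrder A
  have := CStarAlgebra.spectralOrderedRing A
  exact CStarAlgebra.nonneg_iff_eq_star_mul_self.mp (cfc_nonneg h)

theorem IsPos.conjugate {a : A} (ha : IsPos a) {p : A} (hp : IsSelfAdjoint p) :
    IsPos (p * a * p) := by
  obtain ⟨x, rfl⟩ := ha
  exact ⟨x * p, by simp [hp.star_eq, mul_assoc]⟩

theorem IsPos.smul {a : A} (ha : IsPos a) {c : ℝ} (hc : 0 ≤ c) : IsPos (c • a) := by
  obtain ⟨x, rfl⟩ := ha
  refine ⟨√c • x, ?_⟩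
  rw [star_smul, star_trivial √c, smul_mul_smul_comm, Real.mul_self_sqrt hc]

theorem IsSelfAdjoint.of_mul_unit {B : NonUnitalStarSubalgebra ℂ A} {e : A} (he : e ∈ B)
    (h : ∀ b ∈ B, e * b = b ∧ b * e = b) : IsSelfAdjoint e := by
  have h₁ : e * star e = star e := (h _ (star_mem he)).1
  have h₂ : star (e * star e) = star (star e) := congrArg star h₁
  rw [star_mul, star_star, h₁] at h₂
  exact h₂

/-- Cuntz subequivalence is insensitive to positive scalar multiples. -/
theorem CuntzBelow.smul {a b : A} {c d : ℝ} (hc : 0 ≤ c) (hd : 0 ≤ d)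
    (h : CuntzBelow a (d • b)) : CuntzBelow (c • a) b := by
  obtain ⟨v, hv⟩ := h
  refine ⟨fun n => √(c * d) • v n, ?_⟩
  have key : ∀ n, ‖(√(c * d) • v n) * b * star (√(c * d) • v n) - c • a‖ =
      c * ‖v n * (d • b) * star (v n) - a‖ := fun n => by
    have : (√(c * d) • v n) * b * star (√(c * d) • v n) =
        c • (v n * (d • b) * star (v n)) := by
      rw [star_smul, star_trivial, smul_mul_assoc, smul_mul_smul_comm,
        Real.mul_self_sqrt (mul_nonneg hc hd), mul_smul_comm, smul_mul_assoc, smul_smul]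
    rw [this, ← smul_sub, norm_smul, Real.norm_of_nonneg hc]
  simp only [key]
  simpa using hv.const_mul c

/-- A positive contraction `r` in a closed subalgebra `B` can be replaced by a nearby positive
contraction `s` in `B` such that `1 - s` is a multiple of `(1 - r - δ)₊`. -/
theorem exists_isPos_one_sub_eq_smul_cutPos {B : NonUnitalStarSubalgebra ℂ A}
    (hB : IsClosed (B : Set A)) {r : A} (hrB : r ∈ B) (hr : IsPos r) (hr1 : ‖r‖ ≤ 1)
    {δ : ℝ} (hδ : 0 < δ) (hδ1 : δ < 1) :
    ∃ s ∈ B, IsPos s ∧ IsPos (1 - s) ∧ ‖s - r‖ ≤ δ ∧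
      1 - s = (1 - δ)⁻¹ • CutPos (1 - r) δ := by
  have hsa := hr.isSelfAdjoint
  have hd : 0 < 1 - δ := sub_pos.mpr hδ1
  have hspec : ∀ t ∈ spectrum ℝ r, 0 ≤ t ∧ t ≤ 1 := fun t ht => by
    rcases subsingleton_or_nontrivial A with _ | _
    · simp [spectrum.of_subsingleton] at ht
    · exact ⟨hr.spectrum_nonneg ht,
        (le_abs_self t).trans ((spectrum.norm_le_norm_of_mem ht).trans hr1)⟩
  let f : ℝ → ℝ := fun t => min ((1 - δ)⁻¹ * t) 1
  have hf : Continuous f := by fun_prop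
  have hf0 : f 0 = 0 := by simp [f]
  have hone : 1 - cfc f r = cfc (fun t => 1 - f t) r := by
    rw [cfc_sub (fun _ => (1 : ℝ)) f r, cfc_const_one ℝ r]
  refine ⟨cfc f r, ?_, ?_, ?_, ?_, ?_⟩
  · rw [← cfcₙ_eq_cfc (hf := hf.continuousOn) (hf0 := hf0)]
    have := hB
    exact cfcₙ_mem (𝕜' := ℂ) f hrB
  · exact isPos_cfc fun t ht => le_min (mul_nonneg (inv_nonneg.mpr hd.le) (hspec t ht).1) zero_le_one
  · rw [hone]
    exact isPos_cfc fun t _ => sub_nonneg.mpr (min_le_right _ _)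
  · have : cfc f r - r = cfc (fun t => f t - t) r := by
      rw [cfc_sub f (fun t => t) r, cfc_id' ℝ r]
    rw [this]
    refine norm_cfc_le hδ.le fun t ht => ?_
    obtain ⟨h0, h1⟩ := hspec t ht
    have hinv : (1 - δ)⁻¹ * (1 - δ) = 1 := inv_mul_cancel₀ hd.ne'
    rw [Real.norm_eq_abs, abs_le]
    rcases le_total t (1 - δ) with h | h
    · have h2 : (1 - δ)⁻¹ * t ≤ 1 := (inv_mul_le_one₀ hd).mpr h
      have h3 : (1 - δ)⁻¹ * t - t = δ * ((1 - δ)⁻¹ * t) := by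
        linear_combination t * hinv
      have h4 : 0 ≤ (1 - δ)⁻¹ * t := by positivity
      simp only [f, min_eq_left h2, h3]
      constructor <;> nlinarith
    · have h2 : 1 ≤ (1 - δ)⁻¹ * t := (one_le_inv_mul₀ hd).mpr h
      simp only [f, min_eq_right h2]
      constructor <;> linarith
  · have hsub : 1 - r = cfc (fun t : ℝ => 1 - t) r := by
      rw [cfc_sub (fun _ => (1 : ℝ)) (fun t => t) r, cfc_const_one ℝ r, cfc_id' ℝ r]
    rw [hone, CutPos, hsub, ← cfc_comp' (fun t : ℝ => max (t - δ) 0) (fun t => 1 - t) r,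
      ← cfc_smul (1 - δ)⁻¹ _ r]
    congr 1
    funext t
    have hinv : (1 - δ)⁻¹ * (1 - δ) = 1 := inv_mul_cancel₀ hd.ne'
    rw [smul_eq_mul, mul_max_of_nonneg _ _ (inv_nonneg.mpr hd.le), mul_zero]
    simp only [f]
    rw [← max_sub_sub_left, sub_self]
    congr 1
    linear_combination -hinv

theorem norm_mul_mul_self_sub_le {r s a : A} (hr : ‖r‖ ≤ 1) (hs : ‖s‖ ≤ 1) :
    ‖r * a * r‖ ≤ ‖s * a * s‖ + 2 * ‖s - r‖ * ‖a‖ := by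
  have h : r * a * r = s * a * s - ((s - r) * a * s + r * a * (s - r)) := by noncomm_ring
  have h₁ : ‖(s - r) * a * s‖ ≤ ‖s - r‖ * ‖a‖ * 1 :=
    (norm_mul_le _ _).trans (mul_le_mul (norm_mul_le _ _) hs (norm_nonneg _) (by positivity))
  have h₂ : ‖r * a * (s - r)‖ ≤ 1 * ‖a‖ * ‖s - r‖ :=
    (norm_mul_le _ _).trans (by
      gcongr
      exact (norm_mul_le _ _).trans (by gcongr))
  rw [h]
  linarith [norm_sub_le (s * a * s) ((s - r) * a * s + r * a * (s - r)),
    norm_add_le ((s - r) * a * s) (r * a * (s - r))]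

theorem IsPos.norm_le_one {s : A} (hs : IsPos s) (hs' : IsPos (1 - s)) : ‖s‖ ≤ 1 := by
  let _ := CStarAlgebra.spectralOrder A
  have := CStarAlgebra.spectralOrderedRing A
  rw [CStarAlgebra.norm_le_one_iff_of_nonneg s (CStarAlgebra.nonneg_iff_eq_star_mul_self.mpr hs)]
  exact sub_nonneg.mp (CStarAlgebra.nonneg_iff_eq_star_mul_self.mpr hs')

/-- If `A` is a simple unital C*-algebra, `Ω` is a class of unital
C*-algebras, and `A ∈ GTAΩ`, then `A ∈ WTAΩ`. -/
theorem memWTA_of_memGTA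
    (hA : IsSimpleCStarAlgebra A)
    (Ω : Set (NonUnitalStarSubalgebra ℂ A))
    (hΩ : ∀ B ∈ Ω, ∃ e ∈ B, ∀ b ∈ B, e * b = b ∧ b * e = b)
    (h : MemGTA Ω) : MemWTA Ω := by
  intro ε hε F a ha ha0
  have : Nontrivial A := hA.1
  have hna : 0 < ‖a‖ := norm_pos_iff.mpr ha0
  obtain ⟨M, hM⟩ : ∃ M : ℝ, 1 ≤ M ∧ ‖a‖ ≤ M ∧ ∀ x ∈ F, ‖x‖ ≤ M := by
    refine ⟨1 + ‖a‖ + ∑ x ∈ F, ‖x‖, ?_, ?_, fun x hx => ?_⟩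
    · have : 0 ≤ ∑ x ∈ F, ‖x‖ := by positivity
      linarith
    · have : 0 ≤ ∑ x ∈ F, ‖x‖ := by positivity
      linarith
    · have := Finset.single_le_sum (f := fun x : A => ‖x‖) (fun _ _ => norm_nonneg _) hx
      linarith
  obtain ⟨hM1, hMa, hMF⟩ := hM
  obtain ⟨δ, hδ, hδ1, hδε⟩ : ∃ δ : ℝ, 0 < δ ∧ δ < 1 ∧ 4 * (δ * M) ≤ ε := by
    refine ⟨min (1 / 2) (ε / (4 * M)), by positivity,
      (min_le_left _ _).trans_lt (by norm_num), ?_⟩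
    have := (le_div_iff₀ (by positivity : 0 < 4 * M)).mp (min_le_right (1 / 2) (ε / (4 * M)))
    linarith
  have hδM : δ ≤ δ * M := le_mul_of_one_le_right hδ.le hM1
  have hδM0 : 0 < δ * M := by positivity
  obtain ⟨B, hBΩ, hBc, r, hrB, hr, hr1, hFB, hFc, hcut, hnorm⟩ :=
    h δ hδ F (‖a‖⁻¹ • a) 1 (ha.smul (inv_nonneg.mpr hna.le))
      (by rw [norm_smul, norm_inv, norm_norm, inv_mul_cancel₀ hna.ne'])
      ⟨1, by simp⟩ (by simp)
  obtain ⟨p, hpB, hp⟩ := hΩ B hBΩ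
  have hpsa := IsSelfAdjoint.of_mul_unit hpB hp
  have hpp : p * p = p := (hp p hpB).1
  obtain ⟨s, hsB, hs, hs1, hsr, hseq⟩ :=
    exists_isPos_one_sub_eq_smul_cutPos hBc hrB hr hr1 hδ hδ1
  have hsx : ∀ x ∈ F, ‖(s - r) * x‖ ≤ δ * M := fun x hx =>
    (norm_mul_le _ _).trans (mul_le_mul hsr (hMF x hx) (norm_nonneg _) hδ.le)
  have hxs : ∀ x ∈ F, ‖x * (s - r)‖ ≤ δ * M := fun x hx =>
    (norm_mul_le _ _).trans
      ((mul_comm ‖x‖ _).trans_le (mul_le_mul hsr (hMF x hx) (norm_nonneg _) hδ.le))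
  refine ⟨B, hBΩ, hBc, p, hpB, hpsa, hpp, hp, p - s, sub_mem hpB hsB, ?_, ?_, ?_⟩
  · have := hs1.conjugate hpsa
    rwa [mul_sub, mul_one, sub_mul, hpp, (hp s hsB).1, (hp s hsB).2] at this
  · have h1p : IsPos (1 - p) := ⟨1 - p, by
      rw [star_sub, star_one, hpsa.star_eq, mul_sub, sub_mul, sub_mul, hpp]; simp⟩
    rw [show 1 - (p - s) = 1 - p + s by abel]
    exact h1p.add hs
  rw [sub_sub_cancel]
  refine ⟨fun x hx => ?_, fun x hx => ?_, ?_, ?_⟩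
  · obtain ⟨⟨y, hy, hxy⟩, z, hz, hxz⟩ := hFB x hx
    refine ⟨⟨y, hy, ?_⟩, z, hz, ?_⟩
    · rw [show s * x - y = (s - r) * x + (r * x - y) by noncomm_ring]
      linarith [norm_add_le ((s - r) * x) (r * x - y), hsx x hx]
    · rw [show x * s - z = x * (s - r) + (x * r - z) by noncomm_ring]
      linarith [norm_add_le (x * (s - r)) (x * r - z), hxs x hx]
  · rw [show s * x - x * s = ((s - r) * x - x * (s - r)) + (r * x - x * r) by noncomm_ring]
    linarith [norm_add_le ((s - r) * x - x * (s - r)) (r * x - x * r),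
      norm_sub_le ((s - r) * x) (x * (s - r)), hsx x hx, hxs x hx, hFc x hx]
  · rw [hseq]
    rw [one_mul, one_mul, mul_one] at hcut
    exact hcut.smul (inv_nonneg.mpr (sub_pos.mpr hδ1).le) (inv_nonneg.mpr hna.le)
  · rw [mul_smul_comm, smul_mul_assoc, norm_smul, norm_inv, norm_norm,
      le_inv_mul_iff₀ hna] at hnorm
    have h1 := norm_mul_mul_self_sub_le (a := a) hr1 (hs.norm_le_one hs1)
    have h2 : ‖s - r‖ * ‖a‖ ≤ δ * M := mul_le_mul hsr hMa hna.le hδ.le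
    have h3 : ‖a‖ * δ ≤ δ * M := by rw [mul_comm]; gcongr
    linarith
end

section
/- Let Ω be a class of C*-algebras and let A be a finite, infinite-dimensional, simple, unital C*-algebra. Suppose that for every ε > 0, every finite subset F ⊆ A, and every nonzero a ∈ A_+, there exist a C*-subalgebra B ⊆ A with B ∈ Ω and an element r ∈ B_+ with ‖r‖ ≤ 1 such that: (1) rx ∈_ε B and xr ∈_ε B for all x ∈ F; (2) ‖rx − xr‖ < ε for all x ∈ F; (3) 1_A − r ⪯_A a. Then A belongs to the class GTAΩ. -/
open Filter Topology

variable {A : Type*} [CStarAlgebra A]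

/-- In a simple unital C*-algebra the algebraic two-sided ideal generated by a nonzero element
contains the unit. -/
lemma exists_sum_mul_mul_eq_one (hA : IsSimpleCStarAlgebra A) {d : A} (hd : d ≠ 0) :
    ∃ (n : ℕ) (u v : Fin n → A), ∑ i, u i * d * v i = 1 := by
  let T : Set A := {x | ∃ l : List (A × A), (l.map fun p => p.1 * d * p.2).sum = x}
  have hzero : (0 : A) ∈ T := ⟨[], by simp⟩
  have hadd : ∀ x ∈ T, ∀ y ∈ T, x + y ∈ T := by
    rintro _ ⟨l, rfl⟩ _ ⟨m, rfl⟩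
    exact ⟨l ++ m, by simp⟩
  have hleft : ∀ x, ∀ y ∈ T, x * y ∈ T := by
    rintro x _ ⟨l, rfl⟩
    refine ⟨l.map fun p => (x * p.1, p.2), ?_⟩
    rw [← List.sum_map_mul_left, List.map_map]
    simp [Function.comp_def, mul_assoc]
  have hright : ∀ x, ∀ y ∈ T, y * x ∈ T := by
    rintro x _ ⟨l, rfl⟩
    refine ⟨l.map fun p => (p.1, p.2 * x), ?_⟩
    rw [← List.sum_map_mul_right, List.map_map]
    simp [Function.comp_def, mul_assoc]
  let I : TwoSidedIdeal A := .mk' (closure T) (subset_closure hzero)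
    (fun hx hy => map_mem_closure₂ continuous_add hx hy hadd)
    (fun {x} hx => map_mem_closure continuous_neg hx fun y hy => by simpa using hleft (-1) y hy)
    (fun {x y} hy => map_mem_closure (continuous_const_mul x) hy fun z hz => hleft x z hz)
    (fun {x y} hx => map_mem_closure (f := (· * y)) (continuous_mul_const y) hx
      fun z hz => hright y z hz)
  have hI : (I : Set A) = closure T := by
    ext x
    exact TwoSidedIdeal.mem_mk' _ _ _ _ _ _ _
  have hdI : d ∈ closure T := subset_closure ⟨[(1, 1)], by simp⟩
  have hone : (1 : A) ∈ closure T := by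
    rcases hA.2 I (hI ▸ isClosed_closure) with h0 | h1
    · rw [← hI, h0] at hdI
      exact absurd hdI hd
    · rw [← hI, h1]
      trivial
  obtain ⟨t, ⟨s, rfl⟩, ht⟩ := mem_closure_iff.1 hone _ Units.isOpen isUnit_one
  obtain ⟨l, hl⟩ := hright (↑s⁻¹ : A) _ ht
  rw [Units.mul_inv] at hl
  refine ⟨l.length, fun i => l[i].1, fun i => l[i].2, ?_⟩
  rw [← hl, ← Fin.sum_univ_fun_getElem l fun p => p.1 * d * p.2]
  rfl

lemma exists_mul_mul_ne_zero (hA : IsSimpleCStarAlgebra A) {p q : A} (hp : p ≠ 0) (hq : q ≠ 0) :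
    ∃ z, p * z * q ≠ 0 := by
  by_contra! h
  obtain ⟨n, u, v, huv⟩ := exists_sum_mul_mul_eq_one hA hq
  apply hp
  rw [← mul_one p, ← huv, Finset.mul_sum]
  refine Finset.sum_eq_zero fun i _ => ?_
  rw [← mul_assoc, ← mul_assoc, h, zero_mul]

/-- Finitely many nonzero elements of a simple C*-algebra divide a common nonzero element. -/
lemma exists_common_multiple (hA : IsSimpleCStarAlgebra A) {q : A} (hq : q ≠ 0) (l : List A)
    (hl : ∀ x ∈ l, x ≠ 0) :
    ∃ e ≠ (0 : A), (∀ x ∈ l, ∃ L R, e = L * x * R) ∧ ∃ L, e = L * q := by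
  induction l with
  | nil => exact ⟨q, hq, by simp, 1, by simp⟩
  | cons x l ih =>
    obtain ⟨e, he, hle, L, hL⟩ := ih fun y hy => hl y (by simp [hy])
    obtain ⟨z, hz⟩ := exists_mul_mul_ne_zero hA (hl x (by simp)) he
    refine ⟨_, hz, fun y hy => ?_, x * z * L, by rw [hL]; simp only [mul_assoc]⟩
    rcases List.mem_cons.1 hy with rfl | hy
    · exact ⟨1, z * e, by simp [mul_assoc]⟩
    · obtain ⟨L', R, h⟩ := hle y hy
      exact ⟨x * z * L', R, by rw [h]; simp [mul_assoc]⟩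

/-- If `p A p = ℂ p` for a nonzero `p` in a simple unital C*-algebra `A`, then `A` is
finite-dimensional. -/
lemma finiteDimensional_of_corner (hA : IsSimpleCStarAlgebra A) {p : A} (hp : p ≠ 0)
    (h : ∀ b : A, ∃ c : ℂ, p * b * p = c • p) : FiniteDimensional ℂ A := by
  obtain ⟨n, u, v, huv⟩ := exists_sum_mul_mul_eq_one hA hp
  let f : Fin n × Fin n → A := fun i => u i.1 * p * v i.2
  have htop : Submodule.span ℂ (Set.range f) = ⊤ := by
    refine eq_top_iff.2 fun b _ => ?_
    have hb : b = ∑ i, ∑ j, u i * (p * (v i * b * u j) * p) * v j := by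
      conv_lhs => rw [← one_mul b, ← mul_one (1 * b), ← huv, Finset.sum_mul, Finset.sum_mul]
      refine Finset.sum_congr rfl fun i _ => ?_
      rw [Finset.mul_sum]
      exact Finset.sum_congr rfl fun j _ => by simp only [mul_assoc]
    rw [hb]
    refine Submodule.sum_mem _ fun i _ => Submodule.sum_mem _ fun j _ => ?_
    obtain ⟨c, hc⟩ := h (v i * b * u j)
    rw [hc, mul_smul_comm, smul_mul_assoc]
    exact Submodule.smul_mem _ _ (Submodule.subset_span ⟨(i, j), rfl⟩)
  exact Module.finite_def.2 (htop ▸ Submodule.fg_span (Set.finite_range f))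

section Order

variable [PartialOrder A] [StarOrderedRing A]

/-- For a positive element of a simple unital C*-algebra, `1` is dominated by a finite sum of
conjugates of it. -/
lemma exists_one_le_sum_conj (hA : IsSimpleCStarAlgebra A) {d : A} (hd : 0 ≤ d) (hd0 : d ≠ 0) :
    ∃ (n : ℕ) (y : Fin n → A), 1 ≤ ∑ i, y i * d * star (y i) := by
  obtain ⟨n, u, v, huv⟩ := exists_sum_mul_mul_eq_one hA hd0
  have hds : star d = d := (IsSelfAdjoint.of_nonneg hd).star_eq
  have key : (1 : A) + 1 ≤
      ∑ i, u i * d * star (u i) + ∑ i, star (v i) * d * star (star (v i)) := by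
    have h1 : (1 : A) + 1 = ∑ i, (u i * d * v i + star (u i * d * v i)) := by
      rw [Finset.sum_add_distrib, ← star_sum, huv, star_one]
    rw [h1, ← Finset.sum_add_distrib]
    refine Finset.sum_le_sum fun i _ => ?_
    have h2 := star_right_conjugate_nonneg hd (u i - star (v i))
    rw [← sub_nonneg]
    convert h2 using 1
    simp only [star_mul, star_sub, star_star, hds]
    noncomm_ring
  refine ⟨n + n, Fin.append u fun i => star (v i), ?_⟩
  rw [Fin.sum_univ_add]
  simp only [Fin.append_left, Fin.append_right]
  exact (le_add_of_nonneg_right zero_le_one).trans key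

lemma sqrt_mul_eq_zero {p t : A} (hp : 0 ≤ p) (h : p * t = 0) : CFC.sqrt p * t = 0 := by
  rw [← CStarRing.star_mul_self_eq_zero_iff, star_mul,
    (IsSelfAdjoint.of_nonneg (CFC.sqrt_nonneg p)).star_eq, mul_assoc, ← mul_assoc (CFC.sqrt p),
    CFC.sqrt_mul_sqrt_self p hp, h, mul_zero]

/-- In a finite C*-algebra, an element `V` with `V V*` invertible is left cancellable. -/
lemma eq_zero_of_isUnit_mul_star (hfin : ∀ v : A, star v * v = 1 → v * star v = 1) {V z : A}
    (hV : IsUnit (V * star V)) (hz : V * z = 0) : z = 0 := by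
  have hpos : 0 ≤ V * star V := mul_star_self_nonneg V
  have hs : star (CFC.sqrt (V * star V)) = CFC.sqrt (V * star V) :=
    (IsSelfAdjoint.of_nonneg (CFC.sqrt_nonneg _)).star_eq
  obtain ⟨q, hq⟩ := (CFC.isUnit_sqrt_iff _ hpos).2 hV
  have hqq : (q : A) * q = V * star V := by rw [hq, CFC.sqrt_mul_sqrt_self _ hpos]
  have hqs : star ((q⁻¹ : Aˣ) : A) = ((q⁻¹ : Aˣ) : A) := by
    have hstar : star q = q := Units.ext (by rw [Units.coe_star, hq, hs])
    rw [← Units.coe_star, star_inv, hstar]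
  have h1 := hfin (star V * ((q⁻¹ : Aˣ) : A)) <| by
    rw [star_mul, star_star, hqs, mul_assoc, ← mul_assoc V, ← hqq]
    simp
  rw [star_mul, star_star, hqs] at h1
  rw [← one_mul z, ← h1]
  simp only [mul_assoc, hz, mul_zero]

/-- A self-adjoint element of the hereditary subalgebra of `x` is a scalar multiple of a
projection, unless that subalgebra contains two nonzero orthogonal positive elements. -/
lemma exists_mul_self_eq_smul_or_orthogonal {x y : A} (hy : IsSelfAdjoint y)
    (hxy : ∀ t, x * t = 0 → y * t = 0) :
    (∃ c : ℝ, y * y = c • y) ∨ ∃ p q : A, 0 ≤ p ∧ 0 ≤ q ∧ p ≠ 0 ∧ q ≠ 0 ∧ p * q = 0 ∧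
      ∀ t, x * t = 0 → p * t = 0 ∧ q * t = 0 := by
  by_cases hspec : ∃ c ∈ spectrum ℝ y, ∃ d ∈ spectrum ℝ y, c ≠ 0 ∧ d ≠ 0 ∧ c ≠ d
  · right
    obtain ⟨c, hc, d, hd, hc0, hd0, hcd⟩ := hspec
    let f : ℝ → ℝ → ℝ := fun e t => t * max (|c - d| / 2 - |t - e|) 0
    have hf : ∀ c, Continuous (f c) := fun c => by fun_prop
    have hpos : 0 < |c - d| / 2 := half_pos (abs_pos.2 (sub_ne_zero.2 hcd))
    have hnonneg : ∀ e, 0 ≤ cfc (fun t => f e t * t) y := fun e =>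
      cfc_nonneg fun t _ => by
        have : f e t * t = t * t * max (|c - d| / 2 - |t - e|) 0 := by simp only [f]; ring
        rw [this]
        exact mul_nonneg (mul_self_nonneg t) (le_max_right _ _)
    have hne : ∀ e ∈ spectrum ℝ y, e ≠ 0 → cfc (fun t => f e t * t) y ≠ 0 := by
      intro e he he0 h0
      rw [← cfc_const_zero ℝ y] at h0
      have := eqOn_of_cfc_eq_cfc (ha := hy) (hf := by fun_prop) (hg := by fun_prop) h0 he
      simp only [f, sub_self, abs_zero, sub_zero, max_eq_left hpos.le] at this
      have h2 : e * (|c - d| / 2) * e ≠ 0 := by positivity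
      exact h2 this
    have hann : ∀ e t, x * t = 0 → cfc (fun t => f e t * t) y * t = 0 := by
      intro e t ht
      rw [cfc_mul _ _ y (hf e).continuousOn (continuousOn_id' _), cfc_id' ℝ y, mul_assoc, hxy t ht,
        mul_zero]
    refine ⟨_, _, hnonneg c, hnonneg d, hne c hc hc0, hne d hd hd0, ?_,
      fun t ht => ⟨hann c t ht, hann d t ht⟩⟩
    rw [← cfc_mul _ _ y (by fun_prop) (by fun_prop), ← cfc_const_zero ℝ y]
    refine cfc_congr fun t _ => ?_
    have htri : |c - d| ≤ |t - c| + |t - d| := by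
      have := abs_sub_le c t d
      rwa [abs_sub_comm c t] at this
    simp only [f]
    rcases le_total (|c - d| / 2) |t - c| with h1 | h1
    · rw [max_eq_right (sub_nonpos.2 h1)]; simp
    · rw [max_eq_right (a := |c - d| / 2 - |t - d|) (by linarith)]; simp
  · left
    push Not at hspec
    by_cases h0 : ∃ c ∈ spectrum ℝ y, c ≠ 0
    · obtain ⟨c, hc, hc0⟩ := h0
      refine ⟨c, ?_⟩
      nth_rewrite 1 2 [← cfc_id' ℝ y]
      nth_rewrite 3 [← cfc_id' ℝ y]
      rw [← cfc_mul _ _ y, ← cfc_smul _ _ y]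
      refine cfc_congr fun t ht => ?_
      by_cases ht0 : t = 0
      · simp [ht0]
      · simp [hspec c hc t ht hc0 ht0]
    · push Not at h0
      refine ⟨0, ?_⟩
      have : y = 0 := by
        rw [← cfc_id' ℝ y, ← cfc_const_zero ℝ y]
        exact cfc_congr fun t ht => h0 t ht
      simp [this]

lemma exists_orthogonal_pair (hA : IsSimpleCStarAlgebra A) (hinf : ¬ FiniteDimensional ℂ A)
    {x : A} (hx : 0 ≤ x) (hx0 : x ≠ 0) :
    ∃ p q : A, 0 ≤ p ∧ 0 ≤ q ∧ p ≠ 0 ∧ q ≠ 0 ∧ p * q = 0 ∧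
      ∀ t, x * t = 0 → p * t = 0 ∧ q * t = 0 := by
  by_contra hsplit
  have hscalar : ∀ y : A, IsSelfAdjoint y → (∀ t, x * t = 0 → y * t = 0) →
      y ≠ 0 → ∃ c : ℝ, c ≠ 0 ∧ y * y = c • y := fun y hy hxy hy0 => by
    obtain ⟨c, hc⟩ := (exists_mul_self_eq_smul_or_orthogonal hy hxy).resolve_right hsplit
    refine ⟨c, ?_, hc⟩
    rintro rfl
    apply hy0
    rw [← CStarRing.star_mul_self_eq_zero_iff, hy.star_eq, hc, zero_smul]
  have hproj : ∀ y : A, IsSelfAdjoint y → ∀ c : ℝ, c ≠ 0 → y * y = c • y →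
      IsSelfAdjoint (c⁻¹ • y) ∧ (c⁻¹ • y) * (c⁻¹ • y) = c⁻¹ • y := fun y hy c hc h => by
    refine ⟨(IsSelfAdjoint.all _).smul hy, ?_⟩
    rw [smul_mul_smul_comm, h, smul_smul, mul_assoc, inv_mul_cancel₀ hc, mul_one]
  have hnonneg : ∀ y : A, IsSelfAdjoint y → y * y = y → 0 ≤ y := fun y hy h => by
    rw [← h]
    exact hy.mul_self_nonneg
  obtain ⟨c, hc0, hc⟩ := hscalar x (IsSelfAdjoint.of_nonneg hx) (fun _ h => h) hx0
  obtain ⟨hp, hpp⟩ := hproj x (IsSelfAdjoint.of_nonneg hx) c hc0 hc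
  have hxp : ∀ t, x * t = 0 → (c⁻¹ • x) * t = 0 := fun t ht => by rw [smul_mul_assoc, ht, smul_zero]
  have hp0 : c⁻¹ • x ≠ 0 := smul_ne_zero (inv_ne_zero hc0) hx0
  generalize c⁻¹ • x = p at hp hpp hxp hp0
  have hcorner : ∀ b : A, IsSelfAdjoint b → ∃ d : ℝ, p * b * p = d • p := fun b hb => by
    by_cases hy0 : p * b * p = 0
    · exact ⟨0, by rw [hy0, zero_smul]⟩
    have hy : IsSelfAdjoint (p * b * p) := by
      simpa only [hp.star_eq] using hb.conjugate p
    have hpy : p * (p * b * p) = p * b * p := by simp only [← mul_assoc, hpp]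
    have hyp : p * b * p * p = p * b * p := by rw [mul_assoc, hpp]
    generalize p * b * p = y at hy0 hy hpy hyp
    have hxy : ∀ t, x * t = 0 → y * t = 0 := fun t ht => by
      rw [← hyp, mul_assoc, hxp t ht, mul_zero]
    obtain ⟨d, hd0, hd⟩ := hscalar y hy hxy hy0
    obtain ⟨hq, hqq⟩ := hproj y hy d hd0 hd
    have hq0 : d⁻¹ • y ≠ 0 := smul_ne_zero (inv_ne_zero hd0) hy0
    have hqp : d⁻¹ • y * p = d⁻¹ • y := by rw [smul_mul_assoc, hyp]
    have hpq : p * d⁻¹ • y = d⁻¹ • y := by rw [mul_smul_comm, hpy]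
    have hxq : ∀ t, x * t = 0 → d⁻¹ • y * t = 0 := fun t ht => by
      rw [smul_mul_assoc, hxy t ht, smul_zero]
    by_cases hdiff : p - d⁻¹ • y = 0
    · refine ⟨d, ?_⟩
      rw [sub_eq_zero.1 hdiff, smul_smul, mul_inv_cancel₀ hd0, one_smul]
    · refine absurd ⟨d⁻¹ • y, p - d⁻¹ • y, hnonneg _ hq hqq, hnonneg _ (hp.sub hq) ?_, hq0, hdiff,
        ?_, fun t ht => ⟨hxq t ht, ?_⟩⟩ hsplit
      · rw [sub_mul, mul_sub, mul_sub, hpp, hpq, hqp, hqq, sub_self, sub_zero]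
      · rw [mul_sub, hqp, hqq, sub_self]
      · rw [sub_mul, hxp t ht, hxq t ht, sub_zero]
  refine hinf (finiteDimensional_of_corner hA hp0 fun b => ?_)
  obtain ⟨d, hd⟩ := hcorner (realPart b : A) (realPart b).2
  obtain ⟨e, he⟩ := hcorner (imaginaryPart b : A) (imaginaryPart b).2
  refine ⟨d + Complex.I * e, ?_⟩
  conv_lhs => rw [← realPart_add_I_smul_imaginaryPart b]
  rw [mul_add, add_mul, hd, mul_smul_comm, smul_mul_assoc, he, add_smul, mul_smul]
  simp only [Complex.coe_smul]

lemma exists_orthogonal_list (hA : IsSimpleCStarAlgebra A) (hinf : ¬ FiniteDimensional ℂ A)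
    (n : ℕ) {x : A} (hx : 0 ≤ x) (hx0 : x ≠ 0) :
    ∃ l : List A, l.length = n ∧ (∀ y ∈ l, 0 ≤ y ∧ y ≠ 0 ∧ ∀ t, x * t = 0 → y * t = 0) ∧
      l.Pairwise fun y z => z * y = 0 := by
  induction n generalizing x with
  | zero => exact ⟨[], by simp⟩
  | succ n ih =>
    obtain ⟨p, q, hp, hq, hp0, hq0, hpq, hxpq⟩ := exists_orthogonal_pair hA hinf hx hx0
    obtain ⟨l, hlen, hl, hpair⟩ := ih hq hq0
    have hqp : q * p = 0 := by
      simpa [(IsSelfAdjoint.of_nonneg hp).star_eq, (IsSelfAdjoint.of_nonneg hq).star_eq]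
        using congrArg star hpq
    refine ⟨p :: l, by simp [hlen], ?_,
      List.pairwise_cons.2 ⟨fun y hy => (hl y hy).2.2 p hqp, hpair⟩⟩
    intro y hy
    rcases List.mem_cons.1 hy with rfl | hy
    · exact ⟨hp, hp0, fun t ht => (hxpq t ht).1⟩
    · exact ⟨(hl y hy).1, (hl y hy).2.1, fun t ht => (hl y hy).2.2 t (hxpq t ht).2⟩

/-- An infinite-dimensional simple unital C*-algebra contains arbitrarily many pairwise orthogonal
nonzero positive elements. -/
lemma exists_orthogonal_family (hA : IsSimpleCStarAlgebra A) (hinf : ¬ FiniteDimensional ℂ A)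
    (n : ℕ) : ∃ f : Fin n → A, (∀ i, 0 ≤ f i) ∧ (∀ i, f i ≠ 0) ∧ ∀ i j, i ≠ j → f i * f j = 0 := by
  have := hA.1
  obtain ⟨l, rfl, hl, hpair⟩ := exists_orthogonal_list hA hinf n zero_le_one (one_ne_zero (α := A))
  rw [List.pairwise_iff_get] at hpair
  have hnonneg : ∀ i, 0 ≤ l.get i := fun i => (hl _ (l.get_mem i)).1
  refine ⟨l.get, hnonneg, fun i => (hl _ (l.get_mem i)).2.1, fun i j hij => ?_⟩
  rcases lt_or_gt_of_ne hij with h | h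
  · have := congrArg star (hpair i j h)
    rwa [star_mul, star_zero, (IsSelfAdjoint.of_nonneg (hnonneg i)).star_eq,
      (IsSelfAdjoint.of_nonneg (hnonneg j)).star_eq] at this
  · exact hpair j i h

/-- In a finite C*-algebra, `1` is not dominated by `n` conjugates of an element which is
Cuntz below each of `n + 1` pairwise orthogonal nonzero positive elements. -/
lemma not_cuntzBelow_of_orthogonal (hfin : ∀ v : A, star v * v = 1 → v * star v = 1) {n : ℕ}
    {y : Fin n → A} {g : A} (hy : 1 ≤ ∑ i, y i * g * star (y i))
    {f : Fin (n + 1) → A} (hf : ∀ i, 0 ≤ f i) (hf0 : ∀ i, f i ≠ 0)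
    (horth : ∀ i j, i ≠ j → f i * f j = 0) {e : A} (he : ∀ i, ∃ L R, e = L * f i * R) :
    ¬ CuntzBelow g (e * star e) := by
  rintro ⟨w, hw⟩
  choose L R hLR using he
  have hfs : ∀ i, star (f i) = f i := fun i => (IsSelfAdjoint.of_nonneg (hf i)).star_eq
  let s : Fin (n + 1) → A := fun i => f i * (R i * star (R i)) * f i
  have hs : ∀ i, 0 ≤ s i := fun i =>
    conjugate_nonneg_of_nonneg (mul_star_self_nonneg _) (hf i)
  have hms : ∀ i, star (CFC.sqrt (s i)) = CFC.sqrt (s i) := fun i =>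
    (IsSelfAdjoint.of_nonneg (CFC.sqrt_nonneg _)).star_eq
  have hmf : ∀ i j, i ≠ j → CFC.sqrt (s i) * f j = 0 := fun i j hij =>
    sqrt_mul_eq_zero (hs i) (by simp only [s, mul_assoc, horth i j hij, mul_zero])
  have hmm : ∀ i j, i ≠ j → CFC.sqrt (s i) * CFC.sqrt (s j) = 0 := fun i j hij => by
    have hfm : f i * CFC.sqrt (s j) = 0 := by
      simpa only [star_mul, hms, hfs, star_zero] using congrArg star (hmf j i hij.symm)
    exact sqrt_mul_eq_zero (hs i) (by rw [mul_assoc, hfm, mul_zero])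
  have hee : ∀ i, e * star e = L i * (CFC.sqrt (s i) * CFC.sqrt (s i)) * star (L i) := fun i => by
    rw [CFC.sqrt_mul_sqrt_self _ (hs i), hLR i]
    simp only [s, star_mul, hfs, mul_assoc]
  have hG : IsUnit (∑ i, y i * g * star (y i)) := CStarAlgebra.isUnit_of_le 1 hy
  have hlim : Tendsto (fun k => ∑ i, y i * (w k * (e * star e) * star (w k)) * star (y i)) atTop
      (𝓝 (∑ i, y i * g * star (y i))) :=
    tendsto_finsetSum _ fun i _ =>
      ((tendsto_iff_norm_sub_tendsto_zero.2 hw).const_mul (y i)).mul_const (star (y i))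
  obtain ⟨k, hk⟩ := (hlim.eventually (Units.isOpen.mem_nhds hG)).exists
  let V : A := ∑ i : Fin n, y i * w k * L i.castSucc * CFC.sqrt (s i.castSucc)
  have hV : V * star V = ∑ i, y i * (w k * (e * star e) * star (w k)) * star (y i) := by
    simp only [V, star_sum, Finset.sum_mul_sum]
    refine Finset.sum_congr rfl fun i _ => ?_
    rw [Finset.sum_eq_single i]
    · rw [hee i.castSucc]
      simp only [star_mul, hms, mul_assoc]
    · intro j _ hji
      have := hmm i.castSucc j.castSucc fun h => hji (Fin.castSucc_injective n h).symm
      simp only [star_mul, hms, mul_assoc]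
      rw [← mul_assoc (CFC.sqrt _) (CFC.sqrt _), this]
      simp
    · simp
  refine hf0 (Fin.last n) (eq_zero_of_isUnit_mul_star hfin (V := V) (hV ▸ hk) ?_)
  rw [Finset.sum_mul]
  refine Finset.sum_eq_zero fun i _ => ?_
  rw [mul_assoc, hmf _ _ (Fin.castSucc_lt_last i).ne, mul_zero]

/-- If `‖r a r‖` is small compared to `‖a‖ = 1`, then `1 - r` is large, uniformly in `r`. -/
lemma exists_one_le_sum_conj_one_sub (hA : IsSimpleCStarAlgebra A) {a : A} (ha : 0 ≤ a)
    (hna : ‖a‖ = 1) {ε : ℝ} (hε : 0 < ε) :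
    ∃ (n : ℕ) (y : Fin n → A), ∀ r : A, 0 ≤ r → ‖r * a * r‖ < 1 - ε →
      1 ≤ ∑ i, y i * (1 - r) * star (y i) := by
  have := hA.1
  let f : ℝ → ℝ := fun t => max (t - (1 - ε)) 0
  have hfc : Continuous f := by fun_prop
  let k : A := cfc f a
  have hks : star k = k := (cfc_predicate f a : IsSelfAdjoint k).star_eq
  let s : A := CFC.sqrt a
  have hss : star s = s := (IsSelfAdjoint.of_nonneg (CFC.sqrt_nonneg a)).star_eq
  have hsa : s * s = a := CFC.sqrt_mul_sqrt_self a ha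
  let d : A := k * (a - algebraMap ℝ A (1 - ε)) * k
  have hd : d = cfc (fun t => f t * (t - (1 - ε)) * f t) a := by
    rw [cfc_mul _ _ a, cfc_mul _ _ a, cfc_sub _ _ a, cfc_id' ℝ a, cfc_const _ a]
  have hd_nonneg : 0 ≤ d := by
    rw [hd]
    refine cfc_nonneg fun t _ => ?_
    simp only [f]
    rcases le_total (t - (1 - ε)) 0 with h | h
    · simp [max_eq_right h]
    · rw [max_eq_left h]
      positivity
  have hd0 : d ≠ 0 := by
    rw [hd, ← cfc_const_zero ℝ a]
    intro h
    have h1 : (1 : ℝ) ∈ spectrum ℝ a := hna ▸ CStarAlgebra.norm_mem_spectrum_of_nonneg ha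
    have := eqOn_of_cfc_eq_cfc (ha := IsSelfAdjoint.of_nonneg ha) (hf := by fun_prop)
      (hg := by fun_prop) h h1
    simp only [f, sub_sub_cancel, max_eq_left hε.le] at this
    exact (by positivity : ε * ε * ε ≠ 0) this
  obtain ⟨n, y, hy⟩ := exists_one_le_sum_conj hA (d := (2⁻¹ : ℝ) • d)
    (smul_nonneg (by norm_num) hd_nonneg) (smul_ne_zero (by norm_num) hd0)
  refine ⟨n, fun i => y i * (k * s), fun r hr hlt => hy.trans (Finset.sum_le_sum fun i _ => ?_)⟩
  have hrs : star r = r := (IsSelfAdjoint.of_nonneg hr).star_eq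
  have hX : star (k * s) = s * k := by rw [star_mul, hks, hss]
  have hsrrs : s * r * r * s ≤ algebraMap ℝ A (1 - ε) := by
    have h1 : s * r * r * s = star (r * s) * (r * s) := by
      simp only [star_mul, hrs, hss, mul_assoc]
    have h2 : ‖s * r * r * s‖ = ‖r * a * r‖ := by
      rw [h1, CStarRing.norm_star_mul_self, ← CStarRing.norm_self_mul_star, ← hsa]
      simp only [star_mul, hrs, hss, mul_assoc]
    refine (CStarAlgebra.norm_le_iff_le_algebraMap _ ((norm_nonneg _).trans hlt.le) ?_).1
      (h2.trans_le hlt.le)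
    rw [h1]
    exact star_mul_self_nonneg _
  have hle : d ≤ k * s * (1 - r) * (s * k) + k * s * (1 - r) * (s * k) := by
    have h1 : d ≤ k * (a - s * r * r * s) * k := by
      simpa only [hks] using star_right_conjugate_le_conjugate (sub_le_sub_left hsrrs a) k
    have h2 := star_right_conjugate_nonneg (mul_star_self_nonneg (1 - r)) (k * s)
    refine h1.trans (sub_nonneg.1 ?_)
    convert h2 using 1
    rw [hX, star_sub, star_one, hrs, ← hsa]
    noncomm_ring
  have hhalf : (2⁻¹ : ℝ) • d ≤ k * s * (1 - r) * (s * k) := by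
    have := smul_le_smul_of_nonneg_left hle (by norm_num : (0 : ℝ) ≤ 2⁻¹)
    rwa [← two_smul ℝ, smul_smul, inv_mul_cancel₀ two_ne_zero, one_smul] at this
  have := star_right_conjugate_le_conjugate hhalf (y i)
  rw [star_mul, hX]
  simpa only [mul_assoc] using this

end Order

lemma CuntzBelow.conj_s2 {g x : A} (h : CuntzBelow g x) (b : A) :
    CuntzBelow (b * g * star b) x := by
  obtain ⟨v, hv⟩ := h
  refine ⟨fun n => b * v n, ?_⟩
  rw [← tendsto_iff_norm_sub_tendsto_zero] at hv ⊢
  simpa only [star_mul, mul_assoc] using (hv.const_mul b).mul_const (star b)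

lemma CuntzBelow.of_conj {g x L : A} (h : CuntzBelow g (L * x * star L)) : CuntzBelow g x := by
  obtain ⟨v, hv⟩ := h
  exact ⟨fun n => v n * L, by simpa only [star_mul, mul_assoc] using hv⟩

lemma CuntzBelow.cutPos {m x : A} (hm : IsSelfAdjoint m) {ε : ℝ} (hε : 0 < ε)
    (h : CuntzBelow m x) : CuntzBelow (CutPos m ε) x := by
  let f : ℝ → ℝ := fun t => √(max (t - ε) 0 / max t ε)
  have hf : Continuous f := by
    refine Real.continuous_sqrt.comp (Continuous.div (by fun_prop) (by fun_prop) fun t => ?_)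
    exact (lt_max_of_lt_right hε).ne'
  have hcut : CutPos m ε = cfc f m * m * star (cfc f m) := by
    rw [(cfc_predicate f m : IsSelfAdjoint _).star_eq, CutPos]
    conv_rhs => enter [1, 2]; rw [← cfc_id' ℝ m]
    rw [← cfc_mul _ _ m, ← cfc_mul _ _ m]
    refine cfc_congr fun t _ => ?_
    have hsq : f t * t * f t = max (t - ε) 0 / max t ε * t := by
      rw [mul_right_comm, Real.mul_self_sqrt (by positivity)]
    rw [hsq]
    rcases le_total t ε with h | h
    · simp [max_eq_right (sub_nonpos.2 h)]
    · rw [max_eq_left h, div_mul_cancel₀ _ (hε.trans_le h).ne']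
  rw [hcut]
  exact h.conj_s2 _

/-- Let `Ω` be a class of C*-algebras and `A` a finite,
infinite-dimensional, simple, unital C*-algebra.  If for every `ε > 0`, finite
`F ⊆ A` and nonzero positive `a`, there are a C*-subalgebra `B ∈ Ω` and a positive
contraction `r ∈ B` with `rx ∈_ε B`, `xr ∈_ε B`, `‖rx - xr‖ < ε` for `x ∈ F`, and
`1 - r ≾_A a`, then `A ∈ GTAΩ`. -/
theorem memGTA_of_approx
    (hfin : ∀ v : A, star v * v = 1 → v * star v = 1)
    (hinf : ¬ FiniteDimensional ℂ A)
    (hA : IsSimpleCStarAlgebra A)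
    (Ω : Set (NonUnitalStarSubalgebra ℂ A))
    (h : ∀ ε : ℝ, 0 < ε → ∀ F : Finset A, ∀ a : A, IsPos a → a ≠ 0 →
      ∃ B ∈ Ω, IsClosed (B : Set A) ∧
        ∃ r ∈ B, IsPos r ∧ ‖r‖ ≤ 1 ∧
          (∀ x ∈ F, ApproxIn (r * x) (B : Set A) ε ∧ ApproxIn (x * r) (B : Set A) ε) ∧
          (∀ x ∈ F, ‖r * x - x * r‖ < ε) ∧
          CuntzBelow (1 - r) a) :
    MemGTA Ω := by
  let _ := CStarAlgebra.spectralOrder A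
  have _ := CStarAlgebra.spectralOrderedRing A
  have hpos : ∀ x : A, IsPos x ↔ 0 ≤ x := fun x => CStarAlgebra.nonneg_iff_eq_star_mul_self.symm
  intro ε hε F a b ha hna hb _
  rw [hpos] at ha hb
  have hbs : star b = b := (IsSelfAdjoint.of_nonneg hb).star_eq
  have hsqrt : CFC.sqrt a ≠ 0 := by
    rw [Ne, CFC.sqrt_eq_zero_iff a ha]
    rintro rfl
    simp at hna
  obtain ⟨n, y, hy⟩ := exists_one_le_sum_conj_one_sub hA ha hna hε
  obtain ⟨f, hf, hf0, horth⟩ := exists_orthogonal_family hA hinf (n + 1)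
  obtain ⟨e, he0, hef, L, hL⟩ := exists_common_multiple hA hsqrt (List.ofFn f)
    (List.forall_mem_ofFn_iff.2 hf0)
  have hee : e * star e = L * a * star L := by
    rw [hL, star_mul, (IsSelfAdjoint.of_nonneg (CFC.sqrt_nonneg a)).star_eq]
    conv_rhs => rw [← CFC.sqrt_mul_sqrt_self a ha]
    simp only [mul_assoc]
  obtain ⟨B, hBΩ, hB, r, hrB, hr, hr1, hrF, hcomm, hcuntz⟩ := h ε hε F (e * star e)
    ((hpos _).2 (mul_star_self_nonneg e))
    (by rwa [Ne, CStarRing.mul_star_self_eq_zero_iff])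
  refine ⟨B, hBΩ, hB, r, hrB, hr, hr1, hrF, hcomm, ?_, ?_⟩
  · have hrs : IsSelfAdjoint r := IsSelfAdjoint.of_nonneg ((hpos r).1 hr)
    have hm : b * b - b * r * b = b * (1 - r) * star b := by rw [hbs]; noncomm_ring
    rw [hm]
    rw [hee] at hcuntz
    exact (hcuntz.of_conj.conj_s2 b).cutPos (((IsSelfAdjoint.one A).sub hrs).conjugate b) hε
  · by_contra! hlt
    exact not_cuntzBelow_of_orthogonal hfin (hy r ((hpos r).1 hr) hlt) hf hf0 horth
      (fun i => hef _ (List.mem_ofFn.2 ⟨i, rfl⟩)) hcuntz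
end
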